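/- arXiv:1504.05361 — 2 statements merged into one kernel-verified Lean document; each statement's English description precedes it below -/
import Mathlib

section
/- For all m, n ∈ ℤ there exists a unique polynomial P_{m,n} ∈ Polynomial K such that z^{(m)} * z^{(n)} = P_{m,n}(u) * z^{(m+n)} in B. Moreover: if m·n ≥ 0 then P_{m,n} = 1; if m > 0 and n < 0 then P_{m,n} = ∏_{k∈S}(X − k) for some finite multiset S of positive integers; and if m < 0 and n > 0 then P_{m,n} = ∏_{k∈S}(X − k) for some finite multiset S of non-positive integers. -/
open Polynomial

/-- Multiplication by `X` on `K[X]`. -/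
noncomputable def Bx (K : Type*) [Field K] : Module.End K (Polynomial K) :=
  LinearMap.mulLeft K (X : Polynomial K)

/-- The derivative `d/dX` on `K[X]`. -/
noncomputable def By (K : Type*) [Field K] : Module.End K (Polynomial K) :=
  derivative

/-- `u = y·x`. -/
noncomputable def Bu (K : Type*) [Field K] : Module.End K (Polynomial K) :=
  By K * Bx K

/-- `z^{(p)} = x^p` if `p ≥ 0`, `y^{−p}` if `p < 0`. -/
noncomputable def Bz (K : Type*) [Field K] (p : ℤ) : Module.End K (Polynomial K) :=
  if 0 ≤ p then Bx K ^ p.toNat else By K ^ (-p).toNat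

/-!
Since `x * u = (u - 1) * x` and `y * u = (u + 1) * y`, every `z^{(p)}` satisfies
`z^{(p)} * u = (u - p) * z^{(p)}`. When `m` and `n` have opposite signs, one adjacent pair
`x * y = u - 1` or `y * x = u` in the middle of `z^{(m)} * z^{(n)}` can therefore be moved to the
left, where it becomes a linear factor in `u`; repeating this exhausts the shorter power.
For uniqueness, multiplying on the right by `z^{(-p)}` turns `P(u) * z^{(p)} = Q(u) * z^{(p)}` into
an equality of polynomials in `u` with a common monic factor, and `u` is transcendental because it
has the infinitely many eigenvalues `1, 2, 3, …`, with eigenvectors `1, X, X ^ 2, …`.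
-/

/-- The element written `z^{(p)}` in the statement, for a pair `x`, `y` in any monoid: `x ^ p` if
`p ≥ 0` and `y ^ (-p)` if `p < 0`. -/
def signedPow {M : Type*} [Monoid M] (x y : M) (p : ℤ) : M :=
  if 0 ≤ p then x ^ p.toNat else y ^ (-p).toNat

section SignedPow

variable {M : Type*} [Monoid M] (x y : M)

theorem signedPow_natCast (a : ℕ) : signedPow x y a = x ^ a := by
  simp [signedPow]

theorem signedPow_neg_natCast (a : ℕ) : signedPow x y (-a) = y ^ a := by
  cases a with
  | zero => simp [signedPow]
  | succ a => rw [signedPow, if_neg (by lia), neg_neg, Int.toNat_natCast]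

theorem signedPow_zero : signedPow x y 0 = 1 := by
  simpa using signedPow_natCast x y 0

theorem signedPow_one : signedPow x y 1 = x := by
  simpa using signedPow_natCast x y 1

theorem signedPow_neg_one : signedPow x y (-1) = y := by
  simpa using signedPow_neg_natCast x y 1

theorem signedPow_add_of_mul_nonneg {m n : ℤ} (hmn : 0 ≤ m * n) :
    signedPow x y (m + n) = signedPow x y m * signedPow x y n := by
  rcases mul_nonneg_iff.1 hmn with ⟨hm, hn⟩ | ⟨hm, hn⟩
  · lift m to ℕ using hm
    lift n to ℕ using hn
    simp only [← Nat.cast_add, signedPow_natCast, pow_add]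
  · obtain ⟨a, rfl⟩ := Int.exists_eq_neg_ofNat hm
    obtain ⟨b, rfl⟩ := Int.exists_eq_neg_ofNat hn
    simp only [← neg_add, ← Nat.cast_add, signedPow_neg_natCast, pow_add]

end SignedPow

/-- The roots of the polynomial `P_{m,n}` of the statement. The first interval is nonempty only if
`n < 0 < m`, the second only if `m < 0 < n`. -/
noncomputable def structureRoots (m n : ℤ) : Finset ℤ :=
  Finset.Ioc (max 0 (m + n)) m ∪ Finset.Ioc m (min 0 (m + n))

/-- The polynomial `P_{m,n}` of the statement, with coefficients in any commutative ring. -/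
noncomputable def structurePoly (R : Type*) [CommRing R] (m n : ℤ) : R[X] :=
  ∏ k ∈ structureRoots m n, (X - C (k : R))

section StructurePoly

variable {m n : ℤ}

theorem pos_of_mem_structureRoots (hm : 0 < m) {k : ℤ} (hk : k ∈ structureRoots m n) : 0 < k := by
  simp only [structureRoots, Finset.mem_union, Finset.mem_Ioc] at hk
  lia

theorem nonpos_of_mem_structureRoots (hm : m < 0) {k : ℤ} (hk : k ∈ structureRoots m n) :
    k ≤ 0 := by
  simp only [structureRoots, Finset.mem_union, Finset.mem_Ioc] at hk
  lia

theorem structureRoots_of_mul_nonneg (hmn : 0 ≤ m * n) : structureRoots m n = ∅ := by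
  rw [mul_nonneg_iff] at hmn
  ext k
  simp only [structureRoots, Finset.mem_union, Finset.mem_Ioc, Finset.notMem_empty]
  lia

variable (R : Type*) [CommRing R]

theorem structurePoly_monic (m n : ℤ) : (structurePoly R m n).Monic :=
  monic_prod_of_monic _ _ fun _ _ => monic_X_sub_C _

theorem structurePoly_of_mul_nonneg (hmn : 0 ≤ m * n) : structurePoly R m n = 1 := by
  rw [structurePoly, structureRoots_of_mul_nonneg hmn, Finset.prod_empty]

theorem structurePoly_of_pos_of_neg (hm : 0 < m) (hn : n < 0) :
    structurePoly R m n = (X - C (m : R)) * structurePoly R (m - 1) (n + 1) := by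
  have hroots : structureRoots m n = insert m (structureRoots (m - 1) (n + 1)) := by
    ext k
    simp only [structureRoots, Finset.mem_insert, Finset.mem_union, Finset.mem_Ioc]
    lia
  have hm_notMem : m ∉ structureRoots (m - 1) (n + 1) := by
    simp only [structureRoots, Finset.mem_union, Finset.mem_Ioc]
    lia
  rw [structurePoly, hroots, Finset.prod_insert hm_notMem, structurePoly]

theorem structurePoly_of_neg_of_pos (hm : m < 0) (hn : 0 < n) :
    structurePoly R m n = (X - C ((m + 1 : ℤ) : R)) * structurePoly R (m + 1) (n - 1) := by
  have hroots : structureRoots m n = insert (m + 1) (structureRoots (m + 1) (n - 1)) := by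
    ext k
    simp only [structureRoots, Finset.mem_insert, Finset.mem_union, Finset.mem_Ioc]
    lia
  have hm_succ_notMem : m + 1 ∉ structureRoots (m + 1) (n - 1) := by
    simp only [structureRoots, Finset.mem_union, Finset.mem_Ioc]
    lia
  rw [structurePoly, hroots, Finset.prod_insert hm_succ_notMem, structurePoly]

end StructurePoly

theorem semiconjBy_pow_add_natCast_mul {A : Type*} [Semiring A] {a w c : A}
    (h : SemiconjBy a w (w + c)) (hc : Commute a c) (k : ℕ) :
    SemiconjBy (a ^ k) w (w + k * c) := by
  induction k with
  | zero => simp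
  | succ k ih =>
    have hkc : SemiconjBy a (k * c) (k * c) := (Nat.commute_cast a k).mul_right hc
    rw [pow_succ', Nat.cast_succ, add_one_mul, add_comm (k * c), ← add_assoc]
    exact (h.add_right hkc).mul_left ih

section WeylRelation

variable {A : Type*} [Ring A] {x y : A}

theorem semiconjBy_signedPow (hyx : y * x = x * y + 1) (p : ℤ) :
    SemiconjBy (signedPow x y p) (y * x) (y * x - p) := by
  have hx : SemiconjBy x (y * x) (y * x + -1) := by
    rw [SemiconjBy, ← sub_eq_add_neg, sub_eq_of_eq_add hyx, mul_assoc]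
  have hy : SemiconjBy y (y * x) (y * x + 1) := by
    rw [SemiconjBy, add_mul, one_mul, mul_assoc, ← mul_add_one, ← hyx]
  obtain ⟨a, rfl | rfl⟩ := p.eq_nat_or_neg
  · simpa [signedPow_natCast, sub_eq_add_neg] using
      semiconjBy_pow_add_natCast_mul hx (Commute.neg_one_right x) a
  · simpa [signedPow_neg_natCast] using
      semiconjBy_pow_add_natCast_mul hy (Commute.one_right y) a

theorem signedPow_mul_signedPow_of_pos_of_neg (hyx : y * x = x * y + 1) {m n : ℤ}
    (hm : 0 < m) (hn : n < 0) :
    signedPow x y m * signedPow x y n =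
      (y * x - m) * (signedPow x y (m - 1) * signedPow x y (n + 1)) := by
  have hx : signedPow x y m = signedPow x y (m - 1) * x := by
    simpa [signedPow_one] using
      signedPow_add_of_mul_nonneg x y (m := m - 1) (n := 1) (by lia)
  have hy : signedPow x y n = y * signedPow x y (n + 1) := by
    simpa [signedPow_neg_one] using
      signedPow_add_of_mul_nonneg x y (m := -1) (n := n + 1) (by lia)
  have hcomm : signedPow x y (m - 1) * (y * x - 1) = (y * x - m) * signedPow x y (m - 1) := by
    rw [mul_sub, (semiconjBy_signedPow hyx (m - 1)).eq]
    push_cast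
    noncomm_ring
  calc signedPow x y m * signedPow x y n
      = signedPow x y (m - 1) * (x * y) * signedPow x y (n + 1) := by
        simp only [hx, hy, mul_assoc]
    _ = (y * x - m) * (signedPow x y (m - 1) * signedPow x y (n + 1)) := by
        rw [← sub_eq_of_eq_add hyx, hcomm, mul_assoc]

theorem signedPow_mul_signedPow_of_neg_of_pos (hyx : y * x = x * y + 1) {m n : ℤ}
    (hm : m < 0) (hn : 0 < n) :
    signedPow x y m * signedPow x y n =
      (y * x - (m + 1 : ℤ)) * (signedPow x y (m + 1) * signedPow x y (n - 1)) := by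
  have hy : signedPow x y m = signedPow x y (m + 1) * y := by
    simpa [signedPow_neg_one] using
      signedPow_add_of_mul_nonneg x y (m := m + 1) (n := -1) (by lia)
  have hx : signedPow x y n = x * signedPow x y (n - 1) := by
    simpa [signedPow_one] using
      signedPow_add_of_mul_nonneg x y (m := 1) (n := n - 1) (by lia)
  calc signedPow x y m * signedPow x y n
      = signedPow x y (m + 1) * (y * x) * signedPow x y (n - 1) := by
        simp only [hx, hy, mul_assoc]
    _ = (y * x - (m + 1 : ℤ)) * (signedPow x y (m + 1) * signedPow x y (n - 1)) := by
        rw [(semiconjBy_signedPow hyx (m + 1)).eq, mul_assoc]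

variable {R : Type*} [CommRing R] [Algebra R A]

variable (R) in
theorem signedPow_mul_signedPow (hyx : y * x = x * y + 1) (m n : ℤ) :
    signedPow x y m * signedPow x y n =
      aeval (y * x) (structurePoly R m n) * signedPow x y (m + n) := by
  rcases le_or_gt 0 (m * n) with hmn | hmn
  · rw [structurePoly_of_mul_nonneg R hmn, map_one, one_mul, signedPow_add_of_mul_nonneg x y hmn]
  rcases mul_neg_iff.1 hmn with ⟨hm, hn⟩ | ⟨hm, hn⟩
  · rw [signedPow_mul_signedPow_of_pos_of_neg hyx hm hn,
      signedPow_mul_signedPow hyx (m - 1) (n + 1), structurePoly_of_pos_of_neg R hm hn,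
      sub_add_add_cancel]
    simp [mul_assoc]
  · rw [signedPow_mul_signedPow_of_neg_of_pos hyx hm hn,
      signedPow_mul_signedPow hyx (m + 1) (n - 1), structurePoly_of_neg_of_pos R hm hn,
      add_add_sub_cancel]
    simp [mul_assoc]
termination_by m.natAbs

theorem aeval_mul_signedPow_injective (hyx : y * x = x * y + 1) (hu : Transcendental R (y * x))
    (p : ℤ) : Function.Injective fun P : R[X] => aeval (y * x) P * signedPow x y p := by
  intro P Q hPQ
  have hinv : signedPow x y p * signedPow x y (-p) = aeval (y * x) (structurePoly R p (-p)) := by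
    rw [signedPow_mul_signedPow R hyx, add_neg_cancel, signedPow_zero, mul_one]
  apply (structurePoly_monic R p (-p)).isRegular.right
  apply transcendental_iff_injective.1 hu
  simp only [map_mul, ← hinv, ← mul_assoc]
  exact congrArg (· * signedPow x y (-p)) hPQ

theorem exists_unique_Pmn_general (hyx : y * x = x * y + 1) (hu : Transcendental R (y * x))
    (m n : ℤ) :
    (∃! P : R[X], signedPow x y m * signedPow x y n = aeval (y * x) P * signedPow x y (m + n)) ∧
      ∀ P : R[X], signedPow x y m * signedPow x y n = aeval (y * x) P * signedPow x y (m + n) →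
        ((0 ≤ m * n → P = 1) ∧
          (0 < m → n < 0 → ∃ S : Multiset ℤ, (∀ k ∈ S, 0 < k) ∧
            P = (S.map fun k => X - C ((k : ℤ) : R)).prod) ∧
          (m < 0 → 0 < n → ∃ S : Multiset ℤ, (∀ k ∈ S, k ≤ 0) ∧
            P = (S.map fun k => X - C ((k : ℤ) : R)).prod)) := by
  have hmul := signedPow_mul_signedPow R hyx m n
  have huniq (P : R[X])
      (hP : signedPow x y m * signedPow x y n = aeval (y * x) P * signedPow x y (m + n)) :
      P = structurePoly R m n :=
    aeval_mul_signedPow_injective hyx hu (m + n) (hP.symm.trans hmul)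
  refine ⟨⟨_, hmul, huniq⟩, fun P hP => ?_⟩
  obtain rfl := huniq P hP
  exact ⟨structurePoly_of_mul_nonneg R,
    fun hm _ => ⟨(structureRoots m n).val, fun _ => pos_of_mem_structureRoots hm, rfl⟩,
    fun hm _ => ⟨(structureRoots m n).val, fun _ => nonpos_of_mem_structureRoots hm, rfl⟩⟩

end WeylRelation

theorem transcendental_of_infinite_hasEigenvalue {R M : Type*} [CommRing R] [IsDomain R]
    [AddCommGroup M] [Module R M] [Module.IsTorsionFree R M] {f : Module.End R M}
    (hf : {μ | f.HasEigenvalue μ}.Infinite) : Transcendental R f := by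
  rintro ⟨P, hP, hPf⟩
  refine hf ((P.rootSet_finite R).subset fun μ hμ => ?_)
  obtain ⟨v, hv⟩ := hμ.exists_hasEigenvector
  have hroot : P.eval μ • v = 0 := by
    rw [← Module.End.aeval_apply_of_hasEigenvector hv, hPf, LinearMap.zero_apply]
  simpa [mem_rootSet, hP] using (smul_eq_zero.1 hroot).resolve_right hv.2

section Operators

variable (K : Type*) [Field K]

theorem By_mul_Bx : By K * Bx K = Bx K * By K + 1 :=
  LinearMap.ext fun f => by simp [Bx, By, add_comm]

theorem Bu_hasEigenvector (j : ℕ) : (Bu K).HasEigenvector (j + 1) (X ^ j) := by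
  refine ⟨Module.End.mem_eigenspace_iff.2 ?_, pow_ne_zero j X_ne_zero⟩
  simp [Bu, Bx, By, ← pow_succ', smul_eq_C_mul]

theorem transcendental_Bu [CharZero K] : Transcendental K (Bu K) := by
  apply transcendental_of_infinite_hasEigenvalue
  apply Set.infinite_of_injective_forall_mem (f := fun j : ℕ => (j + 1 : K))
  · exact (add_left_injective 1).comp Nat.cast_injective
  · exact fun j => Module.End.hasEigenvalue_of_hasEigenvector (Bu_hasEigenvector K j)

end Operators

/-- For all `m, n ∈ ℤ` there is a unique polynomial `P_{m,n}` with
`z^{(m)} z^{(n)} = P_{m,n}(u) z^{(m+n)}`.  Moreover, if `mn ≥ 0` then `P_{m,n} = 1`;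
if `m > 0 > n` then `P_{m,n}` is a product of linear factors `X − k` with `k`
positive integers; and if `m < 0 < n` it is such a product with `k` non-positive
integers. -/
theorem exists_unique_Pmn (K : Type*) [Field K] [CharZero K] (m n : ℤ) :
    (∃! P : Polynomial K, Bz K m * Bz K n = Polynomial.aeval (Bu K) P * Bz K (m + n)) ∧
      ∀ P : Polynomial K, Bz K m * Bz K n = Polynomial.aeval (Bu K) P * Bz K (m + n) →
        ((0 ≤ m * n → P = 1) ∧
          (0 < m → n < 0 → ∃ S : Multiset ℤ, (∀ k ∈ S, 0 < k) ∧
            P = (S.map fun k => X - C ((k : ℤ) : K)).prod) ∧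
          (m < 0 → 0 < n → ∃ S : Multiset ℤ, (∀ k ∈ S, k ≤ 0) ∧
            P = (S.map fun k => X - C ((k : ℤ) : K)).prod)) :=
  exists_unique_Pmn_general (By_mul_Bx K) (transcendental_Bu K) m n
end

section
/- The K-subalgebra of A generated by the set {x_a * ∂_b : a, b ∈ Fin (n+1)} equals {w ∈ W : w * 𝔼 = 𝔼 * w}, the centralizer of the Euler operator inside the Weyl algebra. (This is the assertion that the image of the homomorphism π : U(gl_{n+1}) → A_{n+1}(K) coincides with A_{n+1}(K)^𝔼.) -/
open MvPolynomial

/-- Multiplication by the variable `X a`. -/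
noncomputable def Wx (K : Type*) [Field K] {E : Type*} (e : E) :
    Module.End K (MvPolynomial E K) :=
  LinearMap.mulLeft K (X e)

/-- The partial derivative `∂_a`. -/
noncomputable def Wy (K : Type*) [Field K] {E : Type*} (e : E) :
    Module.End K (MvPolynomial E K) :=
  (pderiv e).toLinearMap

/-- The Weyl algebra `A_{n+1}(K)` in its standard representation: the subalgebra
of `End_K(K[x_0,…,x_n])` generated by the multiplication operators and the
partial derivatives. -/
noncomputable def WeylSubalgebra (K : Type*) [Field K] (E : Type*) :
    Subalgebra K (Module.End K (MvPolynomial E K)) :=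
  Algebra.adjoin K ({g | ∃ e : E, g = Wx K e} ∪ {g | ∃ e : E, g = Wy K e})

/-- The Euler operator `𝔼 = Σ_a x_a ∂_a`. -/
noncomputable def EulerOp (K : Type*) [Field K] (E : Type*) [Fintype E] :
    Module.End K (MvPolynomial E K) :=
  ∑ e : E, Wx K e * Wy K e

/-!
Let `X` and `Y` be the spans of the `x_a` and of the `y_b = ∂_b`. Since every `⁅y_b, x_a⁆` is a
scalar, each of `X * Y` and `Y * X` lies in the other up to scalars. Normal ordering therefore
writes the Weyl algebra as the sum of the spaces `X ^ p * Y ^ q`. The operator `[𝔼, ·]` acts on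
`X ^ p * Y ^ q` as multiplication by `p - q`, so, in characteristic zero and by independence of
eigenspaces, the centralizer of `𝔼` is the sum of the diagonal pieces `X ^ p * Y ^ p`. Reordering
only the inner factors of `X ^ p * X * Y ^ p * Y` shows by induction that each diagonal piece lies
in the algebra generated by `X * Y`.
-/

section IdemSemiring

variable {α : Type*} [IdemSemiring α] {x y u : α}

theorem mul_pow_succ_le_of_mul_le_add_one (h : y * x ≤ x * y + 1) (n : ℕ) :
    y * x ^ (n + 1) ≤ x ^ (n + 1) * y + x ^ n := by
  induction n with
  | zero => simpa using h
  | succ n ih =>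
    calc
      y * x ^ (n + 2) = y * x ^ (n + 1) * x := by rw [pow_succ, mul_assoc]
      _ ≤ (x ^ (n + 1) * y + x ^ n) * x := by gcongr
      _ = x ^ (n + 1) * (y * x) + x ^ (n + 1) := by rw [add_mul, mul_assoc, pow_succ]
      _ ≤ x ^ (n + 1) * (x * y + 1) + x ^ (n + 1) := by gcongr
      _ = x ^ (n + 2) * y + x ^ (n + 1) := by
        rw [mul_add, mul_one, ← mul_assoc, ← pow_succ, add_assoc, add_idem]

theorem pow_mul_pow_le_of_mul_le (h : x * y ≤ y * x + 1) (one_le : 1 ≤ u) (mul_le : x * y ≤ u)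
    (mul_self_le : u * u ≤ u) (n : ℕ) : x ^ n * y ^ n ≤ u := by
  induction n with
  | zero => simpa using one_le
  | succ n ih =>
    cases n with
    | zero => simpa using mul_le
    | succ n =>
      calc
        x ^ (n + 2) * y ^ (n + 2) = x ^ (n + 1) * (x * y ^ (n + 1)) * y := by
          simp only [pow_succ, mul_assoc]
        _ ≤ x ^ (n + 1) * (y ^ (n + 1) * x + y ^ n) * y := by
          gcongr
          exact mul_pow_succ_le_of_mul_le_add_one h n
        _ = x ^ (n + 1) * y ^ (n + 1) * (x * y) + x ^ (n + 1) * y ^ (n + 1) := by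
          simp only [mul_add, add_mul, mul_assoc, pow_succ y n]
        _ ≤ u * u + u := by gcongr
        _ ≤ u := add_le mul_self_le le_rfl

end IdemSemiring

section NormalOrdering

variable {R A : Type*} [CommSemiring R] [Semiring A] [Algebra R A]

theorem adjoin_toSubmodule_le_of_one_mem_of_mul_mem {s : Set A} {T : Submodule R A}
    (one_mem : 1 ∈ T) (mul_mem : ∀ a ∈ s, ∀ t ∈ T, a * t ∈ T) :
    Subalgebra.toSubmodule (Algebra.adjoin R s) ≤ T := by
  rw [Algebra.adjoin_toSubmodule_le]
  intro w hw
  induction hw using Submonoid.closure_induction_left with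
  | one => exact one_mem
  | mul_left a ha t _ ht => exact mul_mem a ha t ht

theorem adjoin_union_le_iSup_pow_mul_pow {X Y : Submodule R A} (h : Y * X ≤ X * Y ⊔ 1) :
    Subalgebra.toSubmodule (Algebra.adjoin R (X ∪ Y : Set A)) ≤
      ⨆ (p : ℕ) (q : ℕ), X ^ p * Y ^ q := by
  set T : Submodule R A := ⨆ (p : ℕ) (q : ℕ), X ^ p * Y ^ q with hT
  have piece_le (p q : ℕ) : X ^ p * Y ^ q ≤ T := le_iSup₂_of_le p q le_rfl
  have X_mul_le : X * T ≤ T := by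
    simp only [hT, Submodule.mul_iSup, iSup_le_iff, ← mul_assoc, ← pow_succ']
    exact fun p q => piece_le (p + 1) q
  have Y_mul_le : Y * T ≤ T := by
    simp only [hT, Submodule.mul_iSup, iSup_le_iff]
    rintro (_ | p) q
    · simpa [pow_succ'] using piece_le 0 (q + 1)
    · calc
        Y * (X ^ (p + 1) * Y ^ q) = Y * X ^ (p + 1) * Y ^ q := (mul_assoc _ _ _).symm
        _ ≤ (X ^ (p + 1) * Y + X ^ p) * Y ^ q := by
          gcongr
          exact mul_pow_succ_le_of_mul_le_add_one h p
        _ = X ^ (p + 1) * Y ^ (q + 1) + X ^ p * Y ^ q := by rw [add_mul, mul_assoc, ← pow_succ']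
        _ ≤ T := sup_le (piece_le _ _) (piece_le _ _)
  refine adjoin_toSubmodule_le_of_one_mem_of_mul_mem ?_ ?_
  · exact piece_le 0 0 (by simpa only [pow_zero, mul_one] using Submodule.one_le.1 le_rfl)
  · rintro a (ha | ha) t ht
    · exact X_mul_le (Submodule.mul_mem_mul ha ht)
    · exact Y_mul_le (Submodule.mul_mem_mul ha ht)

theorem pow_mul_pow_le_adjoin_mul {X Y : Submodule R A} (h : X * Y ≤ Y * X ⊔ 1) (n : ℕ) :
    X ^ n * Y ^ n ≤ Subalgebra.toSubmodule (Algebra.adjoin R ((X * Y : Submodule R A) : Set A)) :=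
  pow_mul_pow_le_of_mul_le h (Submodule.one_le.2 (one_mem (Algebra.adjoin R _)))
    Algebra.subset_adjoin (Subalgebra.mul_toSubmodule_le _ _ |>.trans (by simp)) n

end NormalOrdering

section Commutator

open scoped Pointwise

variable {A : Type*} [Ring A]

theorem mul_lie_eq_mul_lie_add_lie_mul (a b c : A) : ⁅a * b, c⁆ = a * ⁅b, c⁆ + ⁅a, c⁆ * b := by
  simp only [Ring.lie_def]
  noncomm_ring

theorem lie_mul_eq_lie_mul_add_mul_lie (a b c : A) : ⁅a, b * c⁆ = ⁅a, b⁆ * c + b * ⁅a, c⁆ := by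
  simp only [Ring.lie_def]
  noncomm_ring

theorem span_mul_span_le_of_lie_mem_one {R : Type*} [CommRing R] [Algebra R A] {S T : Set A}
    (h : ∀ s ∈ S, ∀ t ∈ T, ⁅s, t⁆ ∈ (1 : Submodule R A)) :
    Submodule.span R S * Submodule.span R T ≤ Submodule.span R T * Submodule.span R S ⊔ 1 := by
  rw [Submodule.span_mul_span, Submodule.span_le]
  rintro _ ⟨s, hs, t, ht, rfl⟩
  have swap : s * t = t * s + ⁅s, t⁆ := by rw [Ring.lie_def, add_sub_cancel]
  change s * t ∈ _
  rw [swap]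
  exact Submodule.add_mem_sup
    (Submodule.mul_mem_mul (Submodule.subset_span ht) (Submodule.subset_span hs)) (h s hs t ht)

attribute [local instance] LieRing.ofAssociativeRing

variable {ι : Type*} [Fintype ι] [DecidableEq ι] {x y : ι → A}

theorem sum_mul_lie_eq_self (hxx : ∀ a b, ⁅x a, x b⁆ = 0)
    (hyx : ∀ a b, ⁅y a, x b⁆ = if a = b then 1 else 0) (a : ι) : ⁅∑ e, x e * y e, x a⁆ = x a := by
  simp [sum_lie, mul_lie_eq_mul_lie_add_lie_mul, hxx, hyx]

theorem sum_mul_lie_eq_neg (hyy : ∀ a b, ⁅y a, y b⁆ = 0)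
    (hyx : ∀ a b, ⁅y a, x b⁆ = if a = b then 1 else 0) (a : ι) :
    ⁅∑ e, x e * y e, y a⁆ = -y a := by
  have hxy (e : ι) : ⁅x e, y a⁆ = -if a = e then 1 else 0 := by rw [← lie_skew, hyx]
  simp [sum_lie, mul_lie_eq_mul_lie_add_lie_mul, hyy, hxy]

end Commutator

section AdEigenspace

open LieAlgebra (ad)
open scoped Pointwise

attribute [local instance] LieRing.ofAssociativeRing

variable {R A : Type*} [CommRing R] [Ring A] [Algebra R A]

theorem ad_eigenspace_mul_le (E : A) (μ ν : R) :
    (ad R A E).eigenspace μ * (ad R A E).eigenspace ν ≤ (ad R A E).eigenspace (μ + ν) := by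
  rw [Submodule.mul_le]
  intro v hv w hw
  rw [Module.End.mem_eigenspace_iff, LieAlgebra.ad_apply] at hv hw ⊢
  rw [lie_mul_eq_lie_mul_add_mul_lie, hv, hw, smul_mul_assoc, mul_smul_comm, add_smul]

theorem pow_le_ad_eigenspace {E : A} {μ : R} {Z : Submodule R A}
    (hZ : Z ≤ (ad R A E).eigenspace μ) (n : ℕ) : Z ^ n ≤ (ad R A E).eigenspace (n * μ) := by
  induction n with
  | zero => simp [Submodule.one_le, Ring.lie_def]
  | succ n ih =>
    calc
      Z ^ (n + 1) = Z ^ n * Z := pow_succ Z n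
      _ ≤ (ad R A E).eigenspace (n * μ) * (ad R A E).eigenspace μ := mul_le_mul' ih hZ
      _ ≤ (ad R A E).eigenspace (n * μ + μ) := ad_eigenspace_mul_le E _ _
      _ = (ad R A E).eigenspace ((n + 1 : ℕ) * μ) := by rw [Nat.cast_add_one, add_one_mul]

theorem mem_ad_eigenspace_zero_iff {E w : A} :
    w ∈ (ad R A E).eigenspace 0 ↔ w ∈ Subalgebra.centralizer R {E} := by
  simp [Subalgebra.mem_centralizer_iff, Ring.lie_def, sub_eq_zero]

variable {E : A} {X Y : Submodule R A}

theorem pow_mul_pow_le_ad_eigenspace (hX : X ≤ (ad R A E).eigenspace 1)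
    (hY : Y ≤ (ad R A E).eigenspace (-1)) (p q : ℕ) :
    X ^ p * Y ^ q ≤ (ad R A E).eigenspace (p - q) := by
  have h := (mul_le_mul' (pow_le_ad_eigenspace hX p) (pow_le_ad_eigenspace hY q)).trans
    (ad_eigenspace_mul_le E _ _)
  rwa [mul_one, mul_neg_one, ← sub_eq_add_neg] at h

theorem adjoin_mul_le_centralizer (hX : X ≤ (ad R A E).eigenspace 1)
    (hY : Y ≤ (ad R A E).eigenspace (-1)) :
    Algebra.adjoin R ((X * Y : Submodule R A) : Set A) ≤ Subalgebra.centralizer R {E} := by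
  refine Algebra.adjoin_le fun w hw => mem_ad_eigenspace_zero_iff.1 ?_
  have h := pow_mul_pow_le_ad_eigenspace hX hY 1 1
  simp only [pow_one, Nat.cast_one, sub_self] at h
  exact h hw

theorem adjoin_mul_eq_adjoin_union_inf_centralizer [IsDomain R] [CharZero R]
    [Module.IsTorsionFree R A] (hXY : X * Y ≤ Y * X ⊔ 1) (hYX : Y * X ≤ X * Y ⊔ 1)
    (hX : X ≤ (ad R A E).eigenspace 1) (hY : Y ≤ (ad R A E).eigenspace (-1)) :
    Algebra.adjoin R ((X * Y : Submodule R A) : Set A) =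
      Algebra.adjoin R (X ∪ Y : Set A) ⊓ Subalgebra.centralizer R {E} := by
  set U := Algebra.adjoin R ((X * Y : Submodule R A) : Set A)
  have U_le_centralizer : U ≤ Subalgebra.centralizer R {E} := adjoin_mul_le_centralizer hX hY
  refine le_antisymm (le_inf (Algebra.adjoin_le ?_) U_le_centralizer) ?_
  · have mul_le : X * Y ≤ Subalgebra.toSubmodule (Algebra.adjoin R (X ∪ Y : Set A)) :=
      Submodule.mul_le.2 fun a ha b hb =>
        (Algebra.adjoin R (X ∪ Y : Set A)).mul_mem
          (Algebra.subset_adjoin (Or.inl ha)) (Algebra.subset_adjoin (Or.inr hb))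
    exact mul_le
  let N : Submodule R A := ⨆ (μ : R) (_ : μ ≠ 0), (ad R A E).eigenspace μ
  have piece_le (p q : ℕ) : X ^ p * Y ^ q ≤ Subalgebra.toSubmodule U ⊔ N := by
    rcases eq_or_ne p q with rfl | hpq
    · exact le_sup_of_le_left (pow_mul_pow_le_adjoin_mul hXY p)
    · exact le_sup_of_le_right <| le_iSup₂_of_le (p - q : R)
        (sub_ne_zero.2 (Nat.cast_injective.ne hpq)) (pow_mul_pow_le_ad_eigenspace hX hY p q)
  rintro w ⟨hw, hwE⟩
  have hw_sup : w ∈ Subalgebra.toSubmodule U ⊔ N :=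
    ((adjoin_union_le_iSup_pow_mul_pow hYX).trans (iSup₂_le piece_le)) hw
  have modular : (Subalgebra.toSubmodule U ⊔ N) ⊓ (ad R A E).eigenspace 0 =
      Subalgebra.toSubmodule U := by
    rw [sup_inf_assoc_of_le N fun u hu => mem_ad_eigenspace_zero_iff.2 (U_le_centralizer hu),
      ((ad R A E).eigenspaces_iSupIndep 0).symm.eq_bot, sup_bot_eq]
  exact modular.le ⟨hw_sup, mem_ad_eigenspace_zero_iff.2 hwE⟩

theorem adjoin_xy_eq_euler_centralizer_general [IsDomain R] [CharZero R]
    [Module.IsTorsionFree R A] {ι κ : Type*} {x : ι → A} {y : κ → A}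
    (hyx : ∀ b a, ⁅y b, x a⁆ ∈ (1 : Submodule R A))
    (hEx : ∀ a, ⁅E, x a⁆ = x a) (hEy : ∀ b, ⁅E, y b⁆ = -y b) :
    (Algebra.adjoin R {g : A | ∃ a b, g = x a * y b} : Set A) =
      {w : A | w ∈ Algebra.adjoin R ({g | ∃ a, g = x a} ∪ {g | ∃ b, g = y b}) ∧
        w * E = E * w} := by
  set S : Set A := {g | ∃ a, g = x a}
  set T : Set A := {g | ∃ b, g = y b}
  have hS : Submodule.span R S ≤ (ad R A E).eigenspace 1 := by
    refine Submodule.span_le.2 ?_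
    rintro _ ⟨a, rfl⟩
    simp [hEx]
  have hT : Submodule.span R T ≤ (ad R A E).eigenspace (-1) := by
    refine Submodule.span_le.2 ?_
    rintro _ ⟨b, rfl⟩
    simp [hEy]
  have hTS : ∀ t ∈ T, ∀ s ∈ S, ⁅t, s⁆ ∈ (1 : Submodule R A) := by
    rintro _ ⟨b, rfl⟩ _ ⟨a, rfl⟩
    exact hyx b a
  have hST : ∀ s ∈ S, ∀ t ∈ T, ⁅s, t⁆ ∈ (1 : Submodule R A) := fun s hs t ht => by
    rw [← lie_skew]
    exact neg_mem (hTS t ht s hs)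
  have products : {g : A | ∃ a b, g = x a * y b} = S * T := by
    ext g
    simp [S, T, Set.mem_mul, eq_comm]
  have key := adjoin_mul_eq_adjoin_union_inf_centralizer (span_mul_span_le_of_lie_mem_one hST)
    (span_mul_span_le_of_lie_mem_one hTS) hS hT
  rw [Submodule.span_mul_span, Algebra.adjoin_span, Algebra.adjoin_union, Algebra.adjoin_span,
    Algebra.adjoin_span, ← Algebra.adjoin_union] at key
  ext w
  rw [products, key]
  simp [Set.mem_centralizer_iff, eq_comm (a := w * E)]

end AdEigenspace

section WeylRelations

variable (K : Type*) [Field K] {ι : Type*}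

theorem lie_Wx_Wx (a b : ι) : ⁅Wx K a, Wx K b⁆ = 0 := by
  rw [← commute_iff_lie_eq]
  exact LinearMap.ext fun p => mul_left_comm _ _ _

theorem lie_Wy_Wy (a b : ι) : ⁅Wy K a, Wy K b⁆ = 0 := by
  classical
  let D (e : ι) : Derivation K (MvPolynomial ι K) (MvPolynomial ι K) := pderiv e
  have lie_pderiv : ⁅D a, D b⁆ = 0 := derivation_ext fun i => by
    simp [D, Derivation.commutator_apply, pderiv_X, Pi.single_apply, apply_ite]
  calc
    ⁅Wy K a, Wy K b⁆ = (⁅D a, D b⁆ : Derivation K _ _).toLinearMap := rfl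
    _ = 0 := by rw [lie_pderiv, Derivation.coe_zero_linearMap]

theorem lie_Wy_Wx [DecidableEq ι] (a b : ι) : ⁅Wy K a, Wx K b⁆ = if a = b then 1 else 0 := by
  refine LinearMap.ext fun p => ?_
  rcases eq_or_ne a b with rfl | hab
  · simp [Wx, Wy, Ring.lie_def]
  · simp [Wx, Wy, Ring.lie_def, pderiv_X_of_ne hab.symm, hab]

theorem lie_EulerOp_Wx [Fintype ι] (a : ι) : ⁅EulerOp K ι, Wx K a⁆ = Wx K a := by
  classical
  exact sum_mul_lie_eq_self (lie_Wx_Wx K) (lie_Wy_Wx K) a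

theorem lie_EulerOp_Wy [Fintype ι] (a : ι) : ⁅EulerOp K ι, Wy K a⁆ = -Wy K a := by
  classical
  exact sum_mul_lie_eq_neg (lie_Wy_Wy K) (lie_Wy_Wx K) a

theorem lie_Wy_Wx_mem_one (a b : ι) :
    ⁅Wy K a, Wx K b⁆ ∈ (1 : Submodule K (Module.End K (MvPolynomial ι K))) := by
  classical
  rw [lie_Wy_Wx]
  split_ifs
  · exact Submodule.one_le.1 le_rfl
  · exact zero_mem _

end WeylRelations

/-- The subalgebra of `End_K(K[x_0,…,x_n])` generated by `{x_a ∂_b}` equals the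
centralizer of the Euler operator in the Weyl algebra: the image of
`π : U(gl_{n+1}) → A_{n+1}(K)` is `A_{n+1}(K)^𝔼`. -/
theorem adjoin_xy_eq_euler_centralizer (K : Type*) [Field K] [CharZero K] (n : ℕ) :
    (Algebra.adjoin K
        {g : Module.End K (MvPolynomial (Fin (n + 1)) K) |
          ∃ a b : Fin (n + 1), g = Wx K a * Wy K b} : Set (Module.End K (MvPolynomial (Fin (n + 1)) K))) =
      {w : Module.End K (MvPolynomial (Fin (n + 1)) K) |
        w ∈ WeylSubalgebra K (Fin (n + 1)) ∧
          w * EulerOp K (Fin (n + 1)) = EulerOp K (Fin (n + 1)) * w} :=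
  adjoin_xy_eq_euler_centralizer_general (lie_Wy_Wx_mem_one K) (lie_EulerOp_Wx K) (lie_EulerOp_Wy K)
end
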